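/- Suppose char K ≠ 2. The standard decomposition of a Lie derivation of T is unique: if D, D' : T → T are K-linear derivations (D(x*y) = D(x)*y + x*D(y) and likewise for D') and Φ, Φ' : T → T are K-linear maps with central values (Φ(x)*y = y*Φ(x) and Φ'(x)*y = y*Φ'(x) for all x, y ∈ T), and D(x) + Φ(x) = D'(x) + Φ'(x) for all x ∈ T, then D = D' and Φ = Φ'. -/

import Mathlib

/-!
The difference `E = D - D'` is a derivation, and it equals `Φ' - Φ`, so its values are central.
Such a map kills every idempotent (`central_derivation_idempotent`), in particular the diagonal
matrix units `e_ii`. Since `E x` is central, `E x * e_ii = e_ii * E x * e_ii = E (e_ii * x * e_ii)`,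
and `e_ii * x * e_ii` is a scalar multiple of `e_ii`; hence every column of `E x` vanishes
(`UT.central_derivation_eq_zero`).
-/

set_option synthInstance.maxHeartbeats 1000000
set_option maxHeartbeats 1000000

/-- The subalgebra of upper triangular matrices in `Matrix (Fin n) (Fin n) K`. -/
def UT (K : Type*) [Field K] (n : ℕ) : Subalgebra K (Matrix (Fin n) (Fin n) K) where
  carrier := {M | M.BlockTriangular id}
  mul_mem' := fun ha hb => ha.mul hb
  add_mem' := fun ha hb => ha.add hb
  algebraMap_mem' := fun r i j hij => by
    rw [Matrix.algebraMap_matrix_apply, if_neg]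
    intro h
    subst h
    exact lt_irrefl _ hij

/-- The diagonal matrix unit `e_ii`, as an element of the upper triangular algebra. -/
def UT.diagUnit (K : Type*) [Field K] {n : ℕ} (i : Fin n) : UT K n :=
  ⟨Matrix.single i i 1, by
    intro a b hab
    refine Matrix.single_apply_of_ne _ _ _ _ _ ?_
    rintro ⟨rfl, rfl⟩
    exact lt_irrefl _ hab⟩

/-- A derivation with central values kills idempotents: `E e = 2 e E e`, and multiplying
by `e` gives `e E e = 2 e E e`, so that `e E e = 0` and hence `E e = 0`. -/
theorem central_derivation_idempotent {A : Type*} [Ring A] {E : A → A}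
    (hE : ∀ x y, E (x * y) = E x * y + x * E y) (hc : ∀ x y, E x * y = y * E x)
    {e : A} (he : e * e = e) : E e = 0 := by
  have h1 : E e = e * E e + e * E e := by
    have h := hE e e
    rwa [he, hc e e] at h
  have h2 : e * E e = e * E e + e * E e := by
    have h := congrArg (e * ·) h1
    simpa only [mul_add, ← mul_assoc, he] using h
  have h3 : e * E e = 0 := by simpa using h2
  rw [h1, h3, add_zero]

theorem UT.diagUnit_mul_self {K : Type*} [Field K] {n : ℕ} (i : Fin n) :
    UT.diagUnit K i * UT.diagUnit K i = UT.diagUnit K i :=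
  Subtype.ext (by simp [UT.diagUnit])

theorem UT.diagUnit_mul_mul {K : Type*} [Field K] {n : ℕ} (i : Fin n) (x : UT K n) :
    UT.diagUnit K i * x * UT.diagUnit K i = x.1 i i • UT.diagUnit K i :=
  Subtype.ext (by simp [UT.diagUnit, Matrix.single_mul_mul_single])

/-- A derivation `E` of the upper triangular algebra with central values vanishes: column `i`
of `E x` is `E x * e_ii = E (e_ii * x * e_ii) = x_ii • E e_ii = 0`. -/
theorem UT.central_derivation_eq_zero {K : Type*} [Field K] {n : ℕ}
    (E : UT K n →ₗ[K] UT K n)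
    (hE : ∀ x y, E (x * y) = E x * y + x * E y) (hc : ∀ x y, E x * y = y * E x)
    (x : UT K n) : E x = 0 := by
  have hcol (i : Fin n) : E x * UT.diagUnit K i = 0 := by
    have he := UT.diagUnit_mul_self (K := K) i
    have h0 : E (UT.diagUnit K i) = 0 := central_derivation_idempotent hE hc he
    have h := congrArg E (UT.diagUnit_mul_mul i x)
    rw [hE, hE, h0, map_smul, h0, zero_mul, zero_add, mul_zero, add_zero, smul_zero,
      ← hc x, mul_assoc, he] at h
    exact h
  apply Subtype.ext
  ext a i
  have h := congrFun (congrFun (congrArg Subtype.val (hcol i)) a) i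
  simpa [UT.diagUnit] using h

theorem standard_decomposition_unique
    {K : Type*} [Field K] {n : ℕ} (hn : 0 < n)
    (hchar : ringChar K ≠ 2)
    (D D' Φ Φ' : UT K n →ₗ[K] UT K n)
    (hD : ∀ x y : UT K n, D (x * y) = D x * y + x * D y)
    (hD' : ∀ x y : UT K n, D' (x * y) = D' x * y + x * D' y)
    (hΦ : ∀ x y : UT K n, Φ x * y = y * Φ x)
    (hΦ' : ∀ x y : UT K n, Φ' x * y = y * Φ' x)
    (hsum : ∀ x : UT K n, D x + Φ x = D' x + Φ' x) :
    D = D' ∧ Φ = Φ' := by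
  have hdiff (x : UT K n) : (D - D') x = Φ' x - Φ x := by
    rw [LinearMap.sub_apply, sub_eq_sub_iff_add_eq_add, hsum x, add_comm]
  have hzero := UT.central_derivation_eq_zero (D - D')
    (fun x y => by
      simp only [LinearMap.sub_apply, hD, hD', sub_mul, mul_sub]
      abel)
    (fun x y => by rw [hdiff, sub_mul, mul_sub, hΦ, hΦ'])
  have hDD : D = D' := sub_eq_zero.mp (LinearMap.ext hzero)
  refine ⟨hDD, LinearMap.ext fun x => ?_⟩
  have h := hsum x
  rw [hDD] at h
  exact add_left_cancel h
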